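/- Let α > 0, β > 0, t₀ > 0, let Φ : H → ℝ be convex and twice continuously differentiable with argmin Φ nonempty, and let x : [t₀, ∞) → H be a solution of (DIN-AVD). Then: (i) there exists a constant C and a time T ≥ t₀ such that for all t ≥ T, Φ(x(t)) − min Φ ≤ C/log t, ‖ẋ(t)‖ ≤ C/√(log t), and ‖∇Φ(x(t))‖ ≤ C/√(log t); (ii) ∫_{t₀}^∞ (1/t)(Φ(x(t)) − min Φ) dt < ∞. -/

import Mathlib

open Filter MeasureTheory Set
open scoped Topology RealInnerProductSpace

variable {H : Type*} [NormedAddCommGroup H] [InnerProductSpace ℝ H] [CompleteSpace H]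

/-- `x`, together with its first and second derivatives `x'`, `x''`, is a twice continuously
differentiable solution of (DIN-AVD) on `[t₀, ∞)`:
`ẍ(t) + (α/t) ẋ(t) + β ∇²Φ(x(t)) ẋ(t) + ∇Φ(x(t)) = 0`. -/
def IsDINAVDSolution (α β t₀ : ℝ) (Φ : H → ℝ) (x x' x'' : ℝ → H) : Prop :=
  (∀ t ∈ Set.Ici t₀, HasDerivAt x (x' t) t) ∧
  (∀ t ∈ Set.Ici t₀, HasDerivAt x' (x'' t) t) ∧
  ContinuousOn x'' (Set.Ici t₀) ∧
  ∀ t ∈ Set.Ici t₀,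
    x'' t + (α / t) • x' t + β • (fderiv ℝ (gradient Φ) (x t)) (x' t)
      + gradient Φ (x t) = 0

/-! The vanishing damping is handled by a Lyapunov function built on `w = ẋ + β ∇Φ(x)`, which
satisfies `ẇ = -(α/t) ẋ - ∇Φ(x)`. With `u = Φ(x) - min Φ` and `q = (x - xstar)/t`, the function
`L = ‖q + w‖²/2 + α‖q‖²/2 + u + κ (u + ‖w‖²/2)` obeys `L' ≤ -(u + ‖ẋ‖² + ‖∇Φ(x)‖²)/t` for large
`t` and `κ`, which gives (ii). Both `u + ‖ẋ‖²/2` and `u + ‖w‖²/2` are eventually nonincreasing and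
dominated by a multiple of the dissipated quantity, and a nonincreasing `e` with `∫ e/t < ∞` is
`O(1/log t)`; this gives (i). The equation enters only through `t ↦ ∇Φ(x(t))` and its derivative, so
a differentiable selection of subgradients along the curve can take the place of the gradient. -/

section Calculus

theorem antitoneOn_Ici_of_hasDerivWithinAt_nonpos {f f' : ℝ → ℝ} {T : ℝ}
    (hf : ∀ t ∈ Ici T, HasDerivWithinAt f (f' t) (Ici T) t) (hf' : ∀ t ∈ Ici T, f' t ≤ 0) :
    AntitoneOn f (Ici T) :=
  antitoneOn_of_hasDerivWithinAt_nonpos (convex_Ici T)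
    (fun t ht => (hf t ht).continuousWithinAt)
    (fun t ht => (hf t (interior_subset ht)).mono interior_subset)
    (fun t ht => hf' t (interior_subset ht))

theorem exists_tendsto_atTop_of_antitoneOn_Ici {ι R : Type*} [LinearOrder ι]
    [ConditionallyCompleteLattice R] [TopologicalSpace R] [InfConvergenceClass R] {f : ι → R}
    {T : ι} (hf : AntitoneOn f (Ici T)) (hbdd : BddBelow (f '' Ici T)) :
    ∃ l, Tendsto f atTop (𝓝 l) := by
  have hanti : Antitone fun t => f (max T t) := fun s t hst =>
    hf (le_max_left T s) (le_max_left T t) (max_le_max_left T hst)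
  have hrange : BddBelow (range fun t => f (max T t)) :=
    hbdd.mono (range_subset_iff.2 fun t => mem_image_of_mem f (le_max_left T t))
  refine ⟨_, (tendsto_atTop_ciInf hanti hrange).congr' ?_⟩
  filter_upwards [eventually_ge_atTop T] with t ht using by rw [max_eq_right ht]

theorem integrableOn_Ici_of_le_neg_deriv {f f' φ : ℝ → ℝ} {T : ℝ}
    (hf : ∀ t ∈ Ici T, HasDerivWithinAt f (f' t) (Ici T) t) (hbdd : BddBelow (f '' Ici T))
    (hφ : ContinuousOn φ (Ici T)) (hφ_nonneg : ∀ t ∈ Ici T, 0 ≤ φ t)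
    (hφf : ∀ t ∈ Ici T, φ t ≤ -f' t) : IntegrableOn φ (Ici T) := by
  have hf'_nonpos : ∀ t ∈ Ici T, f' t ≤ 0 := fun t ht => by
    linarith [hφ_nonneg t ht, hφf t ht]
  obtain ⟨l, hl⟩ := exists_tendsto_atTop_of_antitoneOn_Ici
    (antitoneOn_Ici_of_hasDerivWithinAt_nonpos hf hf'_nonpos) hbdd
  have hf'_int : IntegrableOn f' (Ici T) := (integrableOn_Ici_iff_integrableOn_Ioi ..).2 <|
    integrableOn_Ioi_deriv_of_nonpos (hf T self_mem_Ici).continuousWithinAt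
      (fun t ht => (hf t (Ioi_subset_Ici_self ht)).hasDerivAt (Ici_mem_nhds ht))
      (fun t ht => hf'_nonpos t (Ioi_subset_Ici_self ht)) hl
  refine hf'_int.neg.mono' (hφ.aestronglyMeasurable measurableSet_Ici) ?_
  filter_upwards [self_mem_ae_restrict measurableSet_Ici] with t ht
  rw [Real.norm_of_nonneg (hφ_nonneg t ht)]
  exact hφf t ht

theorem exists_forall_mul_log_le {e e' L L' : ℝ → ℝ} {T : ℝ} (hT : 1 ≤ T)
    (he : ∀ t ∈ Ici T, HasDerivWithinAt e (e' t) (Ici T) t) (he' : ∀ t ∈ Ici T, e' t ≤ 0)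
    (hL : ∀ t ∈ Ici T, HasDerivWithinAt L (L' t) (Ici T) t) (hL_nonneg : ∀ t ∈ Ici T, 0 ≤ L t)
    (heL : ∀ t ∈ Ici T, L' t ≤ -(e t / t)) :
    ∃ B, ∀ t ∈ Ici T, e t * Real.log t ≤ B := by
  have hone : ∀ t ∈ Ici T, 1 ≤ t := fun t ht => hT.trans ht
  have hanti : AntitoneOn (fun t => L t + e t * Real.log t) (Ici T) := by
    refine antitoneOn_Ici_of_hasDerivWithinAt_nonpos
      (f' := fun t => L' t + (e' t * Real.log t + e t * t⁻¹))
      (fun t ht => (hL t ht).add ((he t ht).mul ?_)) fun t ht => ?_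
    · exact (Real.hasDerivAt_log (zero_lt_one.trans_le (hone t ht)).ne').hasDerivWithinAt
    · have hlog := mul_nonpos_of_nonpos_of_nonneg (he' t ht) (Real.log_nonneg (hone t ht))
      have hdiss := heL t ht
      rw [div_eq_mul_inv] at hdiss
      linarith
  refine ⟨L T + e T * Real.log T, fun t ht => ?_⟩
  have hle : L t + e t * Real.log t ≤ L T + e T * Real.log T := hanti self_mem_Ici ht ht
  linarith [hL_nonneg t ht]

end Calculus

variable {E : Type*} [NormedAddCommGroup E]

section Energy

/-- The energy `Φ(x) - Φ(xstar) + ‖y‖²/2` of a curve `x` with respect to a velocity field `y`, which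
is `ẋ` or a perturbation of it. -/
noncomputable def energy (Φ : E → ℝ) (xstar : E) (x y : ℝ → E) (t : ℝ) : ℝ :=
  Φ (x t) - Φ xstar + ‖y t‖ ^ 2 / 2

variable {Φ : E → ℝ} {xstar : E} {x y : ℝ → E} {t : ℝ}

theorem energy_nonneg (hmin : Φ xstar ≤ Φ (x t)) : 0 ≤ energy Φ xstar x y t :=
  add_nonneg (sub_nonneg.2 hmin) (by positivity)

theorem sub_le_div_of_energy_mul_le {B l : ℝ} (hl : 0 < l)
    (h : energy Φ xstar x y t * l ≤ B) : Φ (x t) - Φ xstar ≤ B / l := by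
  have hle := (le_div_iff₀ hl).2 h
  unfold energy at hle
  linarith [sq_nonneg ‖y t‖]

theorem norm_le_div_sqrt_of_energy_mul_le {B l : ℝ} (hmin : Φ xstar ≤ Φ (x t)) (hl : 0 < l)
    (h : energy Φ xstar x y t * l ≤ B) : ‖y t‖ ≤ √(2 * B) / √l := by
  have hle := (le_div_iff₀ hl).2 h
  unfold energy at hle
  rw [← Real.sqrt_div' _ hl.le, mul_div_assoc]
  exact Real.le_sqrt_of_sq_le (by linarith)

end Energy

variable [InnerProductSpace ℝ E]

section Subgradient

/-- `p` is a subgradient of `Φ` at `a`, that is, `p ∈ ∂Φ(a)`. Convexity of `Φ` is not part of the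
notion. -/
def IsSubgradientAt (Φ : E → ℝ) (p a : E) : Prop :=
  ∀ y, Φ a + ⟪p, y - a⟫ ≤ Φ y

theorem contDiff_gradient {Φ : H → ℝ} {m n : WithTop ℕ∞} (hΦ : ContDiff ℝ n Φ)
    (hmn : m + 1 ≤ n) : ContDiff ℝ m (gradient Φ) :=
  (InnerProductSpace.toDual ℝ H).symm.toContinuousLinearEquiv.contDiff.comp
    (hΦ.fderiv_right hmn)

theorem isSubgradientAt_gradient {Φ : H → ℝ} (hconv : ConvexOn ℝ univ Φ) {a : H}
    (hΦ : DifferentiableAt ℝ Φ a) : IsSubgradientAt Φ (gradient Φ a) a := by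
  intro b
  have hline : ConvexOn ℝ univ (Φ ∘ AffineMap.lineMap (k := ℝ) a b) :=
    hconv.comp_affineMap (AffineMap.lineMap a b)
  have hderiv : HasDerivAt (Φ ∘ AffineMap.lineMap (k := ℝ) a b) (fderiv ℝ Φ a (b - a)) 0 :=
    HasFDerivAt.comp_hasDerivAt 0 (by simpa using hΦ.hasFDerivAt) AffineMap.hasDerivAt_lineMap
  have hslope := hline.le_slope_of_hasDerivAt (mem_univ 0) (mem_univ 1) zero_lt_one hderiv
  simp only [slope_def_field, Function.comp_apply, AffineMap.lineMap_apply_zero,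
    AffineMap.lineMap_apply_one, sub_zero, div_one] at hslope
  rw [inner_gradient_left]
  linarith

namespace IsSubgradientAt

theorem inner_sub_sub_nonneg {Φ : E → ℝ} {p q a b : E} (hp : IsSubgradientAt Φ p a)
    (hq : IsSubgradientAt Φ q b) : 0 ≤ ⟪p - q, a - b⟫ := by
  have hab := hp b
  have hba := hq a
  rw [← neg_sub a b, inner_neg_right] at hab
  rw [inner_sub_left]
  linarith

variable {Φ : E → ℝ} {x p : ℝ → E} {x' p' : E} {S : Set ℝ} {t : ℝ}

theorem inner_deriv_nonneg (hp : ∀ s ∈ S, IsSubgradientAt Φ (p s) (x s)) (ht : t ∈ S)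
    (hS : UniqueDiffWithinAt ℝ S t) (hx : HasDerivWithinAt x x' S t)
    (hp' : HasDerivWithinAt p p' S t) : 0 ≤ ⟪p', x'⟫ := by
  have : (𝓝[S \ {t}] t).NeBot := by
    rwa [← accPt_principal_iff_nhdsWithin, ← uniqueDiffWithinAt_iff_accPt]
  refine ge_of_tendsto ((hasDerivWithinAt_iff_tendsto_slope.1 hp').inner
    (hasDerivWithinAt_iff_tendsto_slope.1 hx)) ?_
  filter_upwards [self_mem_nhdsWithin] with s hs
  rw [slope_def_module, slope_def_module, real_inner_smul_left, real_inner_smul_right, ← mul_assoc]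
  exact mul_nonneg (mul_self_nonneg _) ((hp s hs.1).inner_sub_sub_nonneg (hp t ht))

theorem hasDerivWithinAt_comp (hp : ∀ s ∈ S, IsSubgradientAt Φ (p s) (x s)) (ht : t ∈ S)
    (hx : HasDerivWithinAt x x' S t) (hpt : ContinuousWithinAt p S t) :
    HasDerivWithinAt (fun s => Φ (x s)) ⟪p t, x'⟫ S t := by
  have hlin : HasDerivWithinAt (fun s => ⟪p t, x s⟫) ⟪p t, x'⟫ S t := by
    simpa using (hasDerivWithinAt_const t S (p t)).inner ℝ hx
  -- The remainder lies between `0` and `⟪p s - p t, x s - x t⟫ = o(1) * O(s - t)`.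
  have hrem : HasDerivWithinAt (fun s => Φ (x s) - ⟪p t, x s⟫) 0 S t := by
    have hlittle : (fun s => ‖p s - p t‖ * ‖x s - x t‖) =o[𝓝[S] t] fun s => 1 * (s - t) :=
      ((Asymptotics.isLittleO_one_iff ℝ).2 (tendsto_sub_nhds_zero_iff.2 hpt)).norm_left.mul_isBigO
        hx.hasFDerivWithinAt.isBigO_sub.norm_left
    simp only [one_mul] at hlittle
    refine HasDerivWithinAt.of_isLittleO (Asymptotics.IsBigO.trans_isLittleO
      (Asymptotics.IsBigO.of_bound 1 ?_) hlittle)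
    filter_upwards [self_mem_nhdsWithin] with s hs
    have hlower := hp t ht (x s)
    have hupper := hp s hs (x t)
    have hcs := real_inner_le_norm (p s - p t) (x s - x t)
    rw [smul_zero, sub_zero, one_mul, norm_mul, norm_norm, norm_norm, Real.norm_eq_abs, abs_le]
    simp only [inner_sub_left, inner_sub_right] at hlower hupper hcs
    have := mul_nonneg (norm_nonneg (p s - p t)) (norm_nonneg (x s - x t))
    constructor <;> linarith
  exact ((hlin.add hrem).congr_deriv (add_zero _)).congr_of_mem
    (fun s _ => (add_sub_cancel ⟪p t, x s⟫ (Φ (x s))).symm) ht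

theorem hasDerivWithinAt_energy {xstar : E} {y : ℝ → E} {y' : E}
    (hp : ∀ s ∈ S, IsSubgradientAt Φ (p s) (x s))
    (ht : t ∈ S) (hx : HasDerivWithinAt x x' S t) (hpt : ContinuousWithinAt p S t)
    (hy : HasDerivWithinAt y y' S t) :
    HasDerivWithinAt (energy Φ xstar x y) (⟪p t, x'⟫ + ⟪y t, y'⟫) S t := by
  refine (((hasDerivWithinAt_comp hp ht hx hpt).sub_const (Φ xstar)).add
    (hy.norm_sq.div_const 2)).congr_deriv ?_
  rw [mul_div_cancel_left₀ _ two_ne_zero]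

end IsSubgradientAt

end Subgradient

section Lyapunov

theorem norm_add_smul_sq (v g : E) (β : ℝ) :
    ‖v + β • g‖ ^ 2 = ‖v‖ ^ 2 + 2 * (β * ⟪v, g⟫) + β ^ 2 * ‖g‖ ^ 2 := by
  rw [norm_add_sq_real, real_inner_smul_right, norm_smul, mul_pow, Real.norm_eq_abs, sq_abs]

/-- The velocity `ẋ + β p` that absorbs the Hessian damping term. -/
def dampedVelocity (β : ℝ) (x' p : ℝ → E) (t : ℝ) : E :=
  x' t + β • p t

/-- The Lyapunov function `‖q + w‖²/2 + α‖q‖²/2 + u + κ (u + ‖w‖²/2)`, where `q = (x - xstar)/t`,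
`w = ẋ + β p` and `u = Φ(x) - Φ(xstar)`. -/
noncomputable def lyapunov (α β κ : ℝ) (Φ : E → ℝ) (xstar : E) (x x' p : ℝ → E) (t : ℝ) : ℝ :=
  energy Φ xstar x (fun s => s⁻¹ • (x s - xstar) + dampedVelocity β x' p s) t +
    α * (‖t⁻¹ • (x t - xstar)‖ ^ 2 / 2) + κ * energy Φ xstar x (dampedVelocity β x' p) t

variable {α β κ t : ℝ} {Φ : E → ℝ} {xstar : E} {x x' p : ℝ → E}

theorem mul_norm_le_norm_dampedVelocity_add (hβ : 0 ≤ β) (t : ℝ) :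
    β * ‖p t‖ ≤ ‖dampedVelocity β x' p t‖ + ‖x' t‖ := by
  calc β * ‖p t‖ = ‖dampedVelocity β x' p t - x' t‖ := by
        rw [dampedVelocity, add_sub_cancel_left, norm_smul, Real.norm_of_nonneg hβ]
    _ ≤ ‖dampedVelocity β x' p t‖ + ‖x' t‖ := norm_sub_le _ _

theorem energy_dampedVelocity_le (hmin : Φ xstar ≤ Φ (x t)) :
    energy Φ xstar x (dampedVelocity β x' p) t ≤
      (1 + β ^ 2) * (Φ (x t) - Φ xstar + ‖x' t‖ ^ 2 + ‖p t‖ ^ 2) := by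
  have hw : ‖dampedVelocity β x' p t‖ ^ 2 ≤ 2 * (‖x' t‖ ^ 2 + β ^ 2 * ‖p t‖ ^ 2) := by
    have hsub : 0 ≤ ‖x' t + (-β) • p t‖ ^ 2 := sq_nonneg _
    rw [norm_add_smul_sq] at hsub
    rw [dampedVelocity, norm_add_smul_sq]
    linarith
  unfold energy
  linarith [mul_nonneg (sq_nonneg β) (sub_nonneg.2 hmin),
    mul_nonneg (sq_nonneg β) (sq_nonneg ‖x' t‖), sq_nonneg ‖p t‖]

theorem lyapunov_nonneg (hα : 0 ≤ α) (hκ : 0 ≤ κ) (hmin : Φ xstar ≤ Φ (x t)) :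
    0 ≤ lyapunov α β κ Φ xstar x x' p t :=
  add_nonneg (add_nonneg (energy_nonneg hmin) (by positivity))
    (mul_nonneg hκ (energy_nonneg hmin))

end Lyapunov

section DissipationEstimates

-- Here `v`, `g`, `q` stand for `ẋ`, `∇Φ(x)`, `(x - xstar)/t`, so that the left-hand sides are the
-- time derivatives of `energy` along `dampedVelocity` and of `lyapunov`.

variable {α β t : ℝ}

theorem two_mul_real_inner_le_add_sq (v g : E) : 2 * ⟪v, g⟫ ≤ ‖v‖ ^ 2 + ‖g‖ ^ 2 := by
  linarith [norm_sub_sq_real v g, sq_nonneg ‖v - g‖]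

theorem dampedEnergy_rate_le (hα : 0 ≤ α) (hβ : 0 ≤ β) (ht : 0 < t) (htαβ : α * β ≤ t)
    (v g : E) : ⟪g, v⟫ + ⟪v + β • g, -((α / t) • v + g)⟫ ≤
      -(α * ‖v‖ ^ 2 / t + β * ‖g‖ ^ 2) / 2 := by
  have hexpand : ⟪g, v⟫ + ⟪v + β • g, -((α / t) • v + g)⟫ =
      -(α * ‖v‖ ^ 2 / t + β * ‖g‖ ^ 2) / 2 -
        (α * ‖v + β • g‖ ^ 2 + β * (t - α * β) * ‖g‖ ^ 2) / (2 * t) := by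
    rw [norm_add_smul_sq]
    simp only [inner_neg_right, inner_add_left, inner_add_right, real_inner_smul_left,
      real_inner_smul_right, real_inner_self_eq_norm_sq, real_inner_comm v g]
    field_simp
    ring
  rw [hexpand]
  have := sub_nonneg.2 htαβ
  exact sub_le_self _ (by positivity)

theorem lyapunov_rate_eq (ht : t ≠ 0) (q v g : E) :
    ⟪g, v⟫ + ⟪q + (v + β • g), t⁻¹ • (v - q) + -((α / t) • v + g)⟫ + α * ⟪q, t⁻¹ • (v - q)⟫ =
      ⟪g, v⟫ + ⟪v + β • g, -((α / t) • v + g)⟫ +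
        (‖v‖ ^ 2 + β * ⟪v, g⟫ - (1 + α) * ‖q‖ ^ 2 - (t + β) * ⟪g, q⟫) / t := by
  simp only [inner_neg_right, inner_sub_right, inner_add_left, inner_add_right,
    real_inner_smul_left, real_inner_smul_right, real_inner_self_eq_norm_sq, real_inner_comm v g,
    real_inner_comm v q, real_inner_comm q g]
  field_simp
  ring

theorem lyapunov_rate_le {κ u : ℝ} (hα : 0 ≤ α) (hβ : 0 ≤ β) (hκ : 0 ≤ κ)
    (hκα : 4 + β ≤ κ * α) (hκβ : 2 + β ≤ κ * β) (ht : 1 ≤ t) (htαβ : α * β ≤ t) {q v g : E}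
    (hu : 0 ≤ u) (huq : u ≤ t * ⟪g, q⟫) :
    ⟪g, v⟫ + ⟪q + (v + β • g), t⁻¹ • (v - q) + -((α / t) • v + g)⟫ + α * ⟪q, t⁻¹ • (v - q)⟫ +
      κ * (⟪g, v⟫ + ⟪v + β • g, -((α / t) • v + g)⟫) ≤ -((u + ‖v‖ ^ 2 + ‖g‖ ^ 2) / t) := by
  have ht_pos : 0 < t := zero_lt_one.trans_le ht
  have hgq : 0 ≤ ⟪g, q⟫ := nonneg_of_mul_nonneg_right (hu.trans huq) ht_pos
  set d : ℝ := ⟪g, v⟫ + ⟪v + β • g, -((α / t) • v + g)⟫ with hd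
  have hd_le : t * d ≤ -(α * ‖v‖ ^ 2 + β * ‖g‖ ^ 2) / 2 := by
    have hgt : β * ‖g‖ ^ 2 ≤ t * (β * ‖g‖ ^ 2) := le_mul_of_one_le_left (by positivity) ht
    calc t * d ≤ t * (-(α * ‖v‖ ^ 2 / t + β * ‖g‖ ^ 2) / 2) :=
          mul_le_mul_of_nonneg_left (dampedEnergy_rate_le hα hβ ht_pos htαβ v g) ht_pos.le
      _ = -(α * ‖v‖ ^ 2 + t * (β * ‖g‖ ^ 2)) / 2 := by field_simp
      _ ≤ -(α * ‖v‖ ^ 2 + β * ‖g‖ ^ 2) / 2 := by linarith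
  have hd_nonpos : t * d ≤ 0 :=
    hd_le.trans (by rw [neg_div]; exact neg_nonpos.2 (by positivity))
  have hκd : κ * (t * d) ≤ -((4 + β) * ‖v‖ ^ 2 + (2 + β) * ‖g‖ ^ 2) / 2 := by
    have hv := mul_le_mul_of_nonneg_right hκα (sq_nonneg ‖v‖)
    have hg := mul_le_mul_of_nonneg_right hκβ (sq_nonneg ‖g‖)
    linarith [mul_le_mul_of_nonneg_left hd_le hκ]
  have hvg : β * (2 * ⟪v, g⟫) ≤ β * (‖v‖ ^ 2 + ‖g‖ ^ 2) :=
    mul_le_mul_of_nonneg_left (two_mul_real_inner_le_add_sq v g) hβ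
  have hq : 0 ≤ (1 + α) * ‖q‖ ^ 2 + β * ⟪g, q⟫ := by positivity
  rw [lyapunov_rate_eq ht_pos.ne', ← hd, ← neg_div, le_div_iff₀ ht_pos]
  have hmul : (d + (‖v‖ ^ 2 + β * ⟪v, g⟫ - (1 + α) * ‖q‖ ^ 2 - (t + β) * ⟪g, q⟫) / t + κ * d) * t =
      t * d + (‖v‖ ^ 2 + β * ⟪v, g⟫ - (1 + α) * ‖q‖ ^ 2 - (t + β) * ⟪g, q⟫) + κ * (t * d) := by
    field_simp
  rw [hmul]
  linarith

end DissipationEstimates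

/-- The first-order content of (DIN-AVD) on `[t₀, ∞)`: `p` is a differentiable selection of
subgradients of `Φ` along `x`, and its derivative `p'` takes the place of `∇²Φ(x) ẋ`. Derivatives
are one-sided at `t₀`. -/
structure IsSubgradientDINAVD (α β t₀ : ℝ) (Φ : E → ℝ) (x x' x'' p p' : ℝ → E) : Prop where
  hasDerivWithinAt_position : ∀ t ∈ Ici t₀, HasDerivWithinAt x (x' t) (Ici t₀) t
  hasDerivWithinAt_velocity : ∀ t ∈ Ici t₀, HasDerivWithinAt x' (x'' t) (Ici t₀) t
  hasDerivWithinAt_subgradient : ∀ t ∈ Ici t₀, HasDerivWithinAt p (p' t) (Ici t₀) t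
  isSubgradientAt : ∀ t ∈ Ici t₀, IsSubgradientAt Φ (p t) (x t)
  equation : ∀ t ∈ Ici t₀, x'' t + (α / t) • x' t + β • p' t + p t = 0

theorem IsDINAVDSolution.isSubgradientDINAVD {α β t₀ : ℝ} {Φ : H → ℝ} {x x' x'' : ℝ → H}
    (hsol : IsDINAVDSolution α β t₀ Φ x x' x'') (hconv : ConvexOn ℝ univ Φ)
    (hΦ : Differentiable ℝ Φ) (hgrad : Differentiable ℝ (gradient Φ)) :
    IsSubgradientDINAVD α β t₀ Φ x x' x'' (fun t => gradient Φ (x t))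
      (fun t => fderiv ℝ (gradient Φ) (x t) (x' t)) := by
  obtain ⟨hx, hx', -, heq⟩ := hsol
  exact
    { hasDerivWithinAt_position := fun t ht => (hx t ht).hasDerivWithinAt
      hasDerivWithinAt_velocity := fun t ht => (hx' t ht).hasDerivWithinAt
      hasDerivWithinAt_subgradient := fun t ht =>
        ((hgrad (x t)).hasFDerivAt.comp_hasDerivAt t (hx t ht)).hasDerivWithinAt
      isSubgradientAt := fun t _ => isSubgradientAt_gradient hconv (hΦ (x t))
      equation := heq }

namespace IsSubgradientDINAVD

variable {α β κ t₀ t : ℝ} {Φ : E → ℝ} {xstar : E} {x x' x'' p p' : ℝ → E}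

theorem mono {T : ℝ} (h : IsSubgradientDINAVD α β t₀ Φ x x' x'' p p') (hT : t₀ ≤ T) :
    IsSubgradientDINAVD α β T Φ x x' x'' p p' :=
  have hsub : Ici T ⊆ Ici t₀ := Ici_subset_Ici.2 hT
  { hasDerivWithinAt_position := fun t ht => (h.hasDerivWithinAt_position t (hsub ht)).mono hsub
    hasDerivWithinAt_velocity := fun t ht => (h.hasDerivWithinAt_velocity t (hsub ht)).mono hsub
    hasDerivWithinAt_subgradient := fun t ht =>
      (h.hasDerivWithinAt_subgradient t (hsub ht)).mono hsub
    isSubgradientAt := fun t ht => h.isSubgradientAt t (hsub ht)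
    equation := fun t ht => h.equation t (hsub ht) }

theorem hasDerivWithinAt_energy {y : ℝ → E} {y' : E}
    (h : IsSubgradientDINAVD α β t₀ Φ x x' x'' p p') (ht : t ∈ Ici t₀)
    (hy : HasDerivWithinAt y y' (Ici t₀) t) :
    HasDerivWithinAt (energy Φ xstar x y) (⟪p t, x' t⟫ + ⟪y t, y'⟫) (Ici t₀) t :=
  IsSubgradientAt.hasDerivWithinAt_energy h.isSubgradientAt ht (h.hasDerivWithinAt_position t ht)
    (h.hasDerivWithinAt_subgradient t ht).continuousWithinAt hy

theorem hasDerivWithinAt_dampedVelocity (h : IsSubgradientDINAVD α β t₀ Φ x x' x'' p p')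
    (ht : t ∈ Ici t₀) :
    HasDerivWithinAt (dampedVelocity β x' p) (-((α / t) • x' t + p t)) (Ici t₀) t := by
  refine ((h.hasDerivWithinAt_velocity t ht).add
    ((h.hasDerivWithinAt_subgradient t ht).const_smul β)).congr_deriv ?_
  rw [eq_neg_iff_add_eq_zero, ← h.equation t ht]
  abel

theorem energy_velocity_rate_nonpos (h : IsSubgradientDINAVD α β t₀ Φ x x' x'' p p')
    (hα : 0 ≤ α) (hβ : 0 ≤ β) (ht₀ : 0 ≤ t₀) (ht : t ∈ Ici t₀) :
    ⟪p t, x' t⟫ + ⟪x' t, x'' t⟫ ≤ 0 := by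
  have hmono : 0 ≤ ⟪p' t, x' t⟫ :=
    IsSubgradientAt.inner_deriv_nonneg h.isSubgradientAt ht (uniqueDiffOn_Ici t₀ t ht)
      (h.hasDerivWithinAt_position t ht) (h.hasDerivWithinAt_subgradient t ht)
  have hrate : ⟪p t, x' t⟫ + ⟪x' t, x'' t⟫ = -(α / t * ‖x' t‖ ^ 2 + β * ⟪p' t, x' t⟫) := by
    have hinner := congrArg (fun z => ⟪z, x' t⟫) (h.equation t ht)
    simp only [inner_add_left, real_inner_smul_left, inner_zero_left,
      real_inner_self_eq_norm_sq] at hinner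
    rw [real_inner_comm (x'' t) (x' t)]
    linarith
  have ht_nonneg : 0 ≤ t := ht₀.trans ht
  rw [hrate]
  exact neg_nonpos.2 (by positivity)

theorem hasDerivWithinAt_lyapunov (h : IsSubgradientDINAVD α β t₀ Φ x x' x'' p p')
    (ht_ne : t ≠ 0) (ht : t ∈ Ici t₀) :
    HasDerivWithinAt (lyapunov α β κ Φ xstar x x' p)
      (⟪p t, x' t⟫ + ⟪t⁻¹ • (x t - xstar) + (x' t + β • p t),
          t⁻¹ • (x' t - t⁻¹ • (x t - xstar)) + -((α / t) • x' t + p t)⟫ +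
        α * ⟪t⁻¹ • (x t - xstar), t⁻¹ • (x' t - t⁻¹ • (x t - xstar))⟫ +
        κ * (⟪p t, x' t⟫ + ⟪x' t + β • p t, -((α / t) • x' t + p t)⟫)) (Ici t₀) t := by
  have hq : HasDerivWithinAt (fun s => s⁻¹ • (x s - xstar))
      (t⁻¹ • (x' t - t⁻¹ • (x t - xstar))) (Ici t₀) t := by
    refine ((hasDerivAt_inv ht_ne).hasDerivWithinAt.smul
      ((h.hasDerivWithinAt_position t ht).sub_const xstar)).congr_deriv ?_
    module
  have hw := h.hasDerivWithinAt_dampedVelocity ht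
  refine (((h.hasDerivWithinAt_energy ht (hq.add hw)).add
    ((hq.norm_sq.div_const 2).const_mul α)).add
      ((h.hasDerivWithinAt_energy ht hw).const_mul κ)).congr_deriv ?_
  rw [mul_div_cancel_left₀ _ two_ne_zero]
  rfl

theorem sub_le_mul_inner (h : IsSubgradientDINAVD α β t₀ Φ x x' x'' p p')
    (ht_ne : t ≠ 0) (ht : t ∈ Ici t₀) :
    Φ (x t) - Φ xstar ≤ t * ⟪p t, t⁻¹ • (x t - xstar)⟫ := by
  have hsub := h.isSubgradientAt t ht xstar
  rw [← neg_sub (x t), inner_neg_right] at hsub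
  rw [real_inner_smul_right, mul_inv_cancel_left₀ ht_ne]
  linarith

theorem exists_lyapunov (h : IsSubgradientDINAVD α β t₀ Φ x x' x'' p p') (hα : 0 < α)
    (hβ : 0 < β) (ht₀ : 1 ≤ t₀) (ht₀αβ : α * β ≤ t₀) (hmin : ∀ z, Φ xstar ≤ Φ z) :
    ∃ L L' : ℝ → ℝ, (∀ t ∈ Ici t₀, HasDerivWithinAt L (L' t) (Ici t₀) t) ∧
      (∀ t, 0 ≤ L t) ∧
      ∀ t ∈ Ici t₀, L' t ≤ -((Φ (x t) - Φ xstar + ‖x' t‖ ^ 2 + ‖p t‖ ^ 2) / t) := by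
  obtain ⟨κ, hκ, hκα, hκβ⟩ : ∃ κ : ℝ, 0 ≤ κ ∧ 4 + β ≤ κ * α ∧ 2 + β ≤ κ * β := by
    refine ⟨(4 + β) / α + (2 + β) / β, by positivity, ?_, ?_⟩
    · rw [add_mul, div_mul_cancel₀ _ hα.ne']
      exact le_add_of_nonneg_right (by positivity)
    · rw [add_mul, div_mul_cancel₀ _ hβ.ne']
      exact le_add_of_nonneg_left (by positivity)
  have hone : ∀ t ∈ Ici t₀, 1 ≤ t := fun t ht => ht₀.trans ht
  have hne : ∀ t ∈ Ici t₀, t ≠ 0 := fun t ht => (zero_lt_one.trans_le (hone t ht)).ne'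
  exact ⟨lyapunov α β κ Φ xstar x x' p, _, fun t ht => h.hasDerivWithinAt_lyapunov (hne t ht) ht,
    fun t => lyapunov_nonneg hα.le hκ (hmin (x t)), fun t ht =>
      lyapunov_rate_le hα.le hβ.le hκ hκα hκβ (hone t ht) (ht₀αβ.trans ht)
        (sub_nonneg.2 (hmin (x t))) (h.sub_le_mul_inner (hne t ht) ht)⟩

theorem exists_energy_mul_log_le (h : IsSubgradientDINAVD α β t₀ Φ x x' x'' p p') (hα : 0 < α)
    (hβ : 0 < β) (ht₀ : 1 ≤ t₀) (ht₀αβ : α * β ≤ t₀) (hmin : ∀ z, Φ xstar ≤ Φ z) :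
    ∃ B, ∀ t ∈ Ici t₀, energy Φ xstar x x' t * Real.log t ≤ B := by
  obtain ⟨L, L', hL, hL_nonneg, hL'⟩ := h.exists_lyapunov hα hβ ht₀ ht₀αβ hmin
  refine exists_forall_mul_log_le ht₀
    (fun t ht => h.hasDerivWithinAt_energy ht (h.hasDerivWithinAt_velocity t ht))
    (fun t ht => h.energy_velocity_rate_nonpos hα.le hβ.le (zero_le_one.trans ht₀) ht)
    hL (fun t _ => hL_nonneg t) fun t ht => (hL' t ht).trans (neg_le_neg ?_)
  have ht_nonneg : 0 ≤ t := zero_le_one.trans (ht₀.trans ht)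
  refine div_le_div_of_nonneg_right ?_ ht_nonneg
  unfold energy
  linarith [sq_nonneg ‖x' t‖, sq_nonneg ‖p t‖]

theorem exists_energy_dampedVelocity_mul_log_le
    (h : IsSubgradientDINAVD α β t₀ Φ x x' x'' p p') (hα : 0 < α) (hβ : 0 < β) (ht₀ : 1 ≤ t₀)
    (ht₀αβ : α * β ≤ t₀) (hmin : ∀ z, Φ xstar ≤ Φ z) :
    ∃ B, ∀ t ∈ Ici t₀, energy Φ xstar x (dampedVelocity β x' p) t * Real.log t ≤ B := by
  obtain ⟨L, L', hL, hL_nonneg, hL'⟩ := h.exists_lyapunov hα hβ ht₀ ht₀αβ hmin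
  have hpos : ∀ t ∈ Ici t₀, 0 < t := fun t ht => zero_lt_one.trans_le (ht₀.trans ht)
  refine exists_forall_mul_log_le ht₀
    (fun t ht => h.hasDerivWithinAt_energy ht (h.hasDerivWithinAt_dampedVelocity ht))
    (fun t ht => (dampedEnergy_rate_le hα.le hβ.le (hpos t ht) (ht₀αβ.trans ht)
      (x' t) (p t)).trans ?_)
    (fun t ht => (hL t ht).const_mul (1 + β ^ 2))
    (fun t _ => mul_nonneg (by positivity) (hL_nonneg t)) fun t ht => ?_
  · have := hpos t ht
    rw [neg_div]
    exact neg_nonpos.2 (by positivity)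
  · refine (mul_le_mul_of_nonneg_left (hL' t ht) (by positivity)).trans ?_
    rw [mul_neg, ← mul_div_assoc]
    exact neg_le_neg (div_le_div_of_nonneg_right (energy_dampedVelocity_le (hmin (x t)))
      (hpos t ht).le)

theorem exists_log_rate (h : IsSubgradientDINAVD α β t₀ Φ x x' x'' p p') (hα : 0 < α)
    (hβ : 0 < β) (ht₀ : 1 < t₀) (ht₀αβ : α * β ≤ t₀) (hmin : ∀ z, Φ xstar ≤ Φ z) :
    ∃ C, ∀ t ∈ Ici t₀, Φ (x t) - Φ xstar ≤ C / Real.log t ∧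
      ‖x' t‖ ≤ C / √(Real.log t) ∧ ‖p t‖ ≤ C / √(Real.log t) := by
  obtain ⟨B, hB⟩ := h.exists_energy_mul_log_le hα hβ ht₀.le ht₀αβ hmin
  obtain ⟨B', hB'⟩ := h.exists_energy_dampedVelocity_mul_log_le hα hβ ht₀.le ht₀αβ hmin
  set Cp : ℝ := (√(2 * B') + √(2 * B)) / β with hCp
  refine ⟨max B (max √(2 * B) Cp), fun t ht => ?_⟩
  have hlog : 0 < Real.log t := Real.log_pos (ht₀.trans_le ht)
  have hv : ‖x' t‖ ≤ √(2 * B) / √(Real.log t) :=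
    norm_le_div_sqrt_of_energy_mul_le (hmin _) hlog (hB t ht)
  have hw : ‖dampedVelocity β x' p t‖ ≤ √(2 * B') / √(Real.log t) :=
    norm_le_div_sqrt_of_energy_mul_le (hmin _) hlog (hB' t ht)
  have hp : ‖p t‖ ≤ Cp / √(Real.log t) := by
    rw [hCp, div_right_comm, le_div_iff₀' hβ, add_div]
    exact (mul_norm_le_norm_dampedVelocity_add hβ.le t).trans (add_le_add hw hv)
  refine ⟨(sub_le_div_of_energy_mul_le hlog (hB t ht)).trans ?_, hv.trans ?_, hp.trans ?_⟩
  · gcongr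
    exact le_max_left _ _
  · gcongr
    exact (le_max_left _ _).trans (le_max_right _ _)
  · gcongr
    exact (le_max_right _ _).trans (le_max_right _ _)

theorem continuousOn_inv_mul_gap (h : IsSubgradientDINAVD α β t₀ Φ x x' x'' p p')
    (ht₀ : 0 < t₀) : ContinuousOn (fun t => 1 / t * (Φ (x t) - Φ xstar)) (Ici t₀) :=
  (continuousOn_const.div continuousOn_id fun _ ht => (ht₀.trans_le ht).ne').mul fun t ht =>
    ((IsSubgradientAt.hasDerivWithinAt_comp h.isSubgradientAt ht (h.hasDerivWithinAt_position t ht)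
      (h.hasDerivWithinAt_subgradient t ht).continuousWithinAt).sub_const _).continuousWithinAt

theorem integrableOn_inv_mul_gap (h : IsSubgradientDINAVD α β t₀ Φ x x' x'' p p') (hα : 0 < α)
    (hβ : 0 < β) (ht₀ : 1 ≤ t₀) (ht₀αβ : α * β ≤ t₀) (hmin : ∀ z, Φ xstar ≤ Φ z) :
    IntegrableOn (fun t => 1 / t * (Φ (x t) - Φ xstar)) (Ici t₀) := by
  obtain ⟨L, L', hL, hL_nonneg, hL'⟩ := h.exists_lyapunov hα hβ ht₀ ht₀αβ hmin
  have hpos : ∀ t ∈ Ici t₀, 0 < t := fun t ht => zero_lt_one.trans_le (ht₀.trans ht)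
  refine integrableOn_Ici_of_le_neg_deriv hL ⟨0, forall_mem_image.2 fun _ _ => hL_nonneg _⟩
    (h.continuousOn_inv_mul_gap (zero_lt_one.trans_le ht₀)) (fun t ht => ?_) fun t ht => ?_
  · exact mul_nonneg (one_div_nonneg.2 (hpos t ht).le) (sub_nonneg.2 (hmin (x t)))
  · refine le_trans ?_ (le_neg_of_le_neg (hL' t ht))
    rw [one_div_mul_eq_div]
    refine div_le_div_of_nonneg_right ?_ (hpos t ht).le
    linarith [sq_nonneg ‖x' t‖, sq_nonneg ‖p t‖]

end IsSubgradientDINAVD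

theorem stmt4_general {α β t₀ : ℝ} (hα : 0 < α) (hβ : 0 < β) (ht₀ : 0 < t₀) {Φ : E → ℝ}
    {xstar : E} (hmin : ∀ z, Φ xstar ≤ Φ z) {x x' x'' p p' : ℝ → E}
    (h : IsSubgradientDINAVD α β t₀ Φ x x' x'' p p') :
    (∃ C T : ℝ, t₀ ≤ T ∧ ∀ t, T ≤ t →
      Φ (x t) - Φ xstar ≤ C / Real.log t ∧
      ‖x' t‖ ≤ C / √(Real.log t) ∧ ‖p t‖ ≤ C / √(Real.log t)) ∧
    IntegrableOn (fun t => (1 / t) * (Φ (x t) - Φ xstar)) (Ici t₀) := by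
  obtain ⟨T, hT₀, hT, hTαβ⟩ : ∃ T : ℝ, t₀ ≤ T ∧ 1 < T ∧ α * β ≤ T :=
    ⟨max t₀ (max 2 (α * β)), le_max_left _ _,
      one_lt_two.trans_le ((le_max_left _ _).trans (le_max_right _ _)),
      (le_max_right _ _).trans (le_max_right _ _)⟩
  have hmono := h.mono hT₀
  obtain ⟨C, hC⟩ := hmono.exists_log_rate hα hβ hT hTαβ hmin
  refine ⟨⟨C, T, hT₀, hC⟩, ?_⟩
  rw [← Icc_union_Ici_eq_Ici hT₀]
  exact ((h.continuousOn_inv_mul_gap ht₀).mono Icc_subset_Ici_self).integrableOn_Icc.union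
    (hmono.integrableOn_inv_mul_gap hα hβ hT.le hTαβ hmin)

theorem stmt4 (α β t₀ : ℝ) (hα : 0 < α) (hβ : 0 < β) (ht₀ : 0 < t₀)
    (Φ : H → ℝ) (hconv : ConvexOn ℝ Set.univ Φ) (hΦ : ContDiff ℝ 2 Φ)
    (xstar : H) (hmin : ∀ z, Φ xstar ≤ Φ z)
    (x x' x'' : ℝ → H) (hsol : IsDINAVDSolution α β t₀ Φ x x' x'') :
    (∃ C T : ℝ, t₀ ≤ T ∧ ∀ t, T ≤ t →
      Φ (x t) - Φ xstar ≤ C / Real.log t ∧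
      ‖x' t‖ ≤ C / Real.sqrt (Real.log t) ∧
      ‖gradient Φ (x t)‖ ≤ C / Real.sqrt (Real.log t)) ∧
    IntegrableOn (fun t => (1 / t) * (Φ (x t) - Φ xstar)) (Set.Ici t₀) :=
  stmt4_general hα hβ ht₀ hmin <| hsol.isSubgradientDINAVD hconv (hΦ.differentiable two_ne_zero)
    ((contDiff_gradient (m := 1) hΦ le_rfl).differentiable one_ne_zero)
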